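/- Let X be a compact metric space of finite covering dimension, let n be a positive integer, and let k, l ∈ ℕ satisfy k ≤ n and 4·dim(X) ≤ k − l. Then the set S = { a ∈ M_n(C(X)) : a is positive and l ≤ rank(a(x)) ≤ k for all x ∈ X }, equipped with the supremum-norm topology, is path connected. -/

import Mathlib

open scoped ComplexOrder

/-- `X` has Lebesgue covering dimension at most `d`: every open cover admits an open
refinement in which every point belongs to at most `d + 1` members. -/
def HasCovDimLE (X : Type*) [TopologicalSpace X] (d : ℕ) : Prop :=
  ∀ 𝒰 : Set (Set X), (∀ U ∈ 𝒰, IsOpen U) → ⋃₀ 𝒰 = Set.univ →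
    ∃ 𝒱 : Set (Set X), (∀ V ∈ 𝒱, IsOpen V) ∧ ⋃₀ 𝒱 = Set.univ ∧
      (∀ V ∈ 𝒱, ∃ U ∈ 𝒰, V ⊆ U) ∧
      ∀ x : X, {V ∈ 𝒱 | x ∈ V}.Finite ∧ {V ∈ 𝒱 | x ∈ V}.ncard ≤ d + 1

/-- `X` has Lebesgue covering dimension exactly `d`: `d` is the least natural number
such that `HasCovDimLE X d`. -/
def IsCovDim (X : Type*) [TopologicalSpace X] (d : ℕ) : Prop :=
  HasCovDimLE X d ∧ ∀ e : ℕ, HasCovDimLE X e → d ≤ e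

/-! Let `β = dim_ℝ 𝕜`. The `m × n` matrices of rank less than `l` form a closed cone of real
codimension `β (m + 1 - l) (n + 1 - l)`. On a compact space of covering dimension `d`, continuous
maps that are piecewise linear over the nerve of a fine cover, with vertices in general position,
avoid every cone of codimension greater than `d`, and any two of them can be chosen with all their
pointwise combinations avoiding the cone once its codimension exceeds `2 d + 1`.

If `a` is positive with `l ≤ rank a ≤ k` pointwise, density of the maps avoiding the cone, applied
near each point to `w a E` with `Q a E = 1` of size `l`, yields a `k × n` field `w` with `l ≤ rank
(w a)`: only codimension `β (k + 1 - l)` is involved. The segment from `a` to `(w a)ᴴ (w a)`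
consists of positive elements of the form `c a`, so its rank stays in `[l, k]`. Hence it suffices to
join two Gram fields `sᴴ s` and `tᴴ t` with `s`, `t` of size `k × n` and rank at least `l`, which
follows by joining `s` to `t` through fields of rank at least `l`. -/

open Function Module Set Topology
open scoped Matrix Pointwise

section GenericPosition

variable {E : Type*} [NormedAddCommGroup E] [NormedSpace ℝ E]

lemma isMeagre_range_of_finrank_lt {F : Type*} [NormedAddCommGroup F] [NormedSpace ℝ F]
    [FiniteDimensional ℝ F] [FiniteDimensional ℝ E] {f : F → E} (hf : ContDiff ℝ 1 f)
    (h : finrank ℝ F < finrank ℝ E) : IsMeagre (range f) := by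
  have hdense : Dense (range f)ᶜ := hf.dense_compl_range_of_finrank_lt_finrank h
  rw [← image_univ, ← iUnion_compactCovering F, image_iUnion]
  refine isMeagre_iUnion fun i ↦ IsNowhereDense.isMeagre ?_
  have hclosed : IsClosed (f '' compactCovering F i) :=
    ((isCompact_compactCovering F i).image hf.continuous).isClosed
  exact (isClosed_isNowhereDense_iff_compl.2
    ⟨hclosed.isOpen_compl, hdense.mono (compl_subset_compl.2 (image_subset_range f _))⟩).2

/-- A set `B` has codimension greater than `D` in the sense of general position: sweeping `B`
along a linear span of at most `D` vectors gives only a meagre set. -/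
def HasCodimGT (B : Set E) (D : ℕ) : Prop :=
  ∀ S : Finset E, S.card ≤ D → IsMeagre (B + (Submodule.span ℝ (S : Set E) : Set E))

namespace HasCodimGT

variable {B : Set E} {D : ℕ}

lemma of_subset_iUnion_range [FiniteDimensional ℝ E] {F : Type*} [NormedAddCommGroup F]
    [NormedSpace ℝ F] [FiniteDimensional ℝ F] {Q : Type*} [Countable Q] {f : Q → F → E}
    (hf : ∀ q, ContDiff ℝ 1 (f q)) (hB : B ⊆ ⋃ q, range (f q))
    (h : finrank ℝ F + D < finrank ℝ E) : HasCodimGT B D := by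
  intro S hS
  set W := Submodule.span ℝ (S : Set E)
  have hW : finrank ℝ W ≤ D := (finrank_span_finset_le_card S).trans hS
  let g (q : Q) (y : F × W) : E := f q y.1 + y.2
  have hg (q : Q) : ContDiff ℝ 1 (g q) :=
    ((hf q).comp contDiff_fst).add (W.subtypeL.contDiff.comp contDiff_snd)
  have hsub : B + (W : Set E) ⊆ ⋃ q, range (g q) := by
    rintro _ ⟨b, hb, w, hw, rfl⟩
    obtain ⟨q, x, rfl⟩ := mem_iUnion.1 (hB hb)
    exact mem_iUnion.2 ⟨q, (x, ⟨w, hw⟩), rfl⟩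
  refine (isMeagre_iUnion fun q ↦ isMeagre_range_of_finrank_lt (hg q) ?_).mono hsub
  rw [finrank_prod]
  omega

lemma dense_forall_add_mem_span_notMem [CompleteSpace E] (hB : HasCodimGT B D) {J : Type*}
    [Finite J] (p : J → E) :
    Dense {u | ∀ S : Finset J, S.card ≤ D → ∀ w ∈ Submodule.span ℝ (p '' S), u + w ∉ B} := by
  classical
  have hmeagre : IsMeagre (⋃ S : {S : Finset J // S.card ≤ D},
      (B + (Submodule.span ℝ (p '' (S : Finset J)) : Set E))) := by
    refine isMeagre_iUnion fun S ↦ ?_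
    rw [← Finset.coe_image]
    exact hB _ (Finset.card_image_le.trans S.2)
  refine (dense_of_mem_residual hmeagre).mono fun u (hu : u ∉ _) S hS w hw hmem ↦ hu ?_
  exact mem_iUnion.2 ⟨⟨S, hS⟩, u + w, hmem, -w, neg_mem hw, add_neg_cancel_right u w⟩

lemma dense_update_generalPosition [CompleteSpace E] (hB : HasCodimGT B D)
    (hcone : ∀ c : ℝ, c ≠ 0 → c • B ⊆ B) {J : Type*} [Fintype J] [DecidableEq J]
    {T : Set J} {t : J} {p : J → E}
    (hp : ∀ c : J → ℝ, c ≠ 0 → support c ⊆ T → (support c).ncard ≤ D + 1 → ∑ j, c j • p j ∉ B) :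
    Dense {u | ∀ c : J → ℝ, c ≠ 0 → support c ⊆ insert t T → (support c).ncard ≤ D + 1 →
      ∑ j, c j • update p t u j ∉ B} := by
  refine (hB.dense_forall_add_mem_span_notMem p).mono fun u hu c hc hsupp hcard ↦ ?_
  have hrest : ∑ j ∈ Finset.univ.erase t, c j • update p t u j
      = ∑ j ∈ Finset.univ.erase t, c j • p j :=
    Finset.sum_congr rfl fun j hj ↦ by rw [update_of_ne (Finset.ne_of_mem_erase hj)]
  rw [← Finset.add_sum_erase _ _ (Finset.mem_univ t), hrest, update_self]
  by_cases hct : c t = 0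
  · rw [hct, zero_smul, ← zero_smul ℝ (p t), ← hct,
      Finset.add_sum_erase _ (fun j ↦ c j • p j) (Finset.mem_univ t)]
    refine hp c hc (fun j hj ↦ (hsupp hj).resolve_left ?_) hcard
    rintro rfl
    exact hj hct
  · intro hmem
    set S : Finset J := {j | c j ≠ 0} with hS
    have hScard : (S.erase t).card ≤ D := by
      have : S.card ≤ D + 1 := by
        rwa [← ncard_coe_finset, hS, Finset.coe_filter_univ]
      rw [Finset.card_erase_of_mem (by simpa [hS] using hct)]
      omega
    refine hu (S.erase t) hScard ((c t)⁻¹ • ∑ j ∈ Finset.univ.erase t, c j • p j)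
      (Submodule.smul_mem _ _ (Submodule.sum_mem _ fun j hj ↦ ?_)) ?_
    · by_cases hcj : c j = 0
      · simp [hcj]
      · exact Submodule.smul_mem _ _ (Submodule.subset_span ⟨j, by simp_all, rfl⟩)
    · have := hcone (c t)⁻¹ (inv_ne_zero hct) (smul_mem_smul_set hmem)
      rwa [smul_add, inv_smul_smul₀ hct] at this

theorem dense_generalPosition [CompleteSpace E] (hB : HasCodimGT B D)
    (hcone : ∀ c : ℝ, c ≠ 0 → c • B ⊆ B) {J : Type*} [Fintype J] :
    Dense {p : J → E | ∀ c : J → ℝ, c ≠ 0 → (support c).ncard ≤ D + 1 → ∑ j, c j • p j ∉ B} := by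
  classical
  refine dense_iff_inter_open.2 fun O hO hne ↦ ?_
  suffices h : ∀ T : Finset J, ∃ p ∈ O, ∀ c : J → ℝ, c ≠ 0 → support c ⊆ T →
      (support c).ncard ≤ D + 1 → ∑ j, c j • p j ∉ B by
    obtain ⟨p, hpO, hp⟩ := h Finset.univ
    exact ⟨p, hpO, fun c hc hcard ↦ hp c hc (by simp) hcard⟩
  intro T
  induction T using Finset.induction_on with
  | empty =>
    obtain ⟨p, hp⟩ := hne
    refine ⟨p, hp, fun c hc hsupp ↦ absurd (Function.support_eq_empty_iff.1 ?_) hc⟩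
    simpa using hsupp
  | insert t T _ ih =>
    obtain ⟨p, hpO, hp⟩ := ih
    have hopen : IsOpen (update p t ⁻¹' O) := hO.preimage (continuous_const.update t continuous_id)
    obtain ⟨u, huO, hu⟩ := (dense_update_generalPosition hB hcone hp (t := t)).inter_open_nonempty
      _ hopen ⟨p t, by simpa using hpO⟩
    exact ⟨update p t u, huO, by simpa using hu⟩

end HasCodimGT

end GenericPosition

section CoveringDimension

lemma ncard_support_mul_le {κ ι R : Type*} [Fintype κ] [Finite ι] [MulZeroClass R] (c : κ → R)
    (w : ι → R) :
    (support fun q : κ × ι ↦ c q.1 * w q.2).ncard ≤ Fintype.card κ * (support w).ncard := by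
  rw [← Nat.card_eq_fintype_card, ← ncard_univ, ← ncard_prod]
  exact ncard_le_ncard fun q hq ↦ ⟨mem_univ _, right_ne_zero_of_mul hq⟩

variable {X : Type*} [TopologicalSpace X] {E : Type*} [NormedAddCommGroup E] [NormedSpace ℝ E]

lemma dist_sum_partitionOfUnity_smul_le {ι : Type*} [Fintype ι] {s : Set X}
    (ρ : PartitionOfUnity ι X s) {x : X} (hx : x ∈ s) {p : ι → E} {e : E} {ε : ℝ}
    (h : ∀ i, ρ i x ≠ 0 → dist (p i) e ≤ ε) : dist (∑ i, ρ i x • p i) e ≤ ε := by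
  rw [← finsum_eq_sum_of_fintype]
  exact ρ.finsum_smul_mem_convex hx (g := fun i _ ↦ p i) h (convex_closedBall e ε)

variable [CompactSpace X] [T2Space X] {d : ℕ}

lemma HasCovDimLE.exists_partitionOfUnity (hX : HasCovDimLE X d) {κ : Type*} {U : κ → Set X}
    (hU : ∀ k, IsOpen (U k)) (hcover : ⋃ k, U k = univ) :
    ∃ (𝒱 : Finset (Set X)) (ρ : PartitionOfUnity 𝒱 X univ),
      (∀ V, ∃ k, support (ρ V) ⊆ U k) ∧ ∀ x, (support fun V ↦ ρ V x).ncard ≤ d + 1 := by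
  obtain ⟨𝒱, hopen, hcover', hrefine, hmult⟩ := hX (range U)
    (by rintro _ ⟨k, rfl⟩; exact hU k) (by rwa [sUnion_range])
  obtain ⟨𝒲, hsub, hfin, hcover''⟩ := isCompact_univ.elim_finite_subcover_image
    (b := 𝒱) (c := id) hopen (by simpa [sUnion_eq_biUnion] using hcover'.ge)
  lift 𝒲 to Finset (Set X) using hfin
  obtain ⟨ρ, hρ⟩ := PartitionOfUnity.exists_isSubordinate isClosed_univ
    (fun V : 𝒲 ↦ (V : Set X)) (fun V ↦ hopen _ (hsub V.2))
    (by simpa [iUnion_subtype] using hcover'')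
  have hρV (V : 𝒲) : support (ρ V) ⊆ V := (subset_tsupport _).trans (hρ V)
  refine ⟨𝒲, ρ, fun V ↦ ?_, fun x ↦ ?_⟩
  · obtain ⟨_, ⟨k, rfl⟩, hVk⟩ := hrefine V (hsub V.2)
    exact ⟨k, (hρV V).trans hVk⟩
  · refine (ncard_le_ncard_of_injOn Subtype.val (fun V hV ↦ ?_) Subtype.val_injective.injOn
      (hmult x).1).trans (hmult x).2
    exact ⟨hsub V.2, hρV V hV⟩

variable [CompleteSpace E] {B : Set E} {D : ℕ}

theorem HasCovDimLE.dense_forall_sum_smul_notMem (hX : HasCovDimLE X d) (hB : HasCodimGT B D)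
    (hcone : ∀ c : ℝ, c ≠ 0 → c • B ⊆ B) {κ : Type*} [Fintype κ]
    (hD : Fintype.card κ * (d + 1) ≤ D + 1) :
    Dense {g : κ → C(X, E) | ∀ x, ∀ c : κ → ℝ, c ≠ 0 → ∑ k, c k • g k x ∉ B} := by
  refine Metric.dense_iff.2 fun g ε hε ↦ ?_
  obtain ⟨𝒱, ρ, hsupp, hmult⟩ := hX.exists_partitionOfUnity
    (U := fun z ↦ {x | ∀ k, dist (g k x) (g k z) < ε / 4})
    (fun z ↦ by
      simp only [ofPred_forall]
      exact isOpen_iInter_of_finite fun k ↦ isOpen_lt (by fun_prop) continuous_const)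
    (eq_univ_of_forall fun x ↦ mem_iUnion.2 ⟨x, fun k ↦ by simpa using by positivity⟩)
  choose z hz using hsupp
  obtain ⟨p, hp, hpg⟩ := (hB.dense_generalPosition hcone).exists_dist_lt
    (fun q : κ × 𝒱 ↦ g q.1 (z q.2)) (ε := ε / 4) (by positivity)
  let g' (k : κ) : C(X, E) := ⟨fun x ↦ ∑ V, ρ V x • p (k, V), by fun_prop⟩
  refine ⟨g', ?_, fun x c hc ↦ ?_⟩
  · rw [Metric.mem_ball, dist_pi_lt_iff hε]
    intro k
    refine ((ContinuousMap.dist_le (by positivity)).2 fun x ↦ ?_).trans_lt (half_lt_self hε)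
    refine dist_sum_partitionOfUnity_smul_le ρ (mem_univ x) fun V hV ↦ ?_
    have hgz : dist (g k x) (g k (z V)) < ε / 4 := hz V hV k
    have hgp : dist (g k (z V)) (p (k, V)) < ε / 4 :=
      ((dist_pi_lt_iff (by positivity)).1 hpg) (k, V)
    linarith [dist_triangle_left (p (k, V)) (g k x) (g k (z V)), dist_comm (g k x) (g k (z V))]
  · have hsum : ∑ k, c k • g' k x = ∑ q : κ × 𝒱, (c q.1 * ρ q.2 x) • p q := by
      simp [g', Fintype.sum_prod_type, Finset.smul_sum, mul_smul]
    rw [hsum]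
    refine hp _ ?_ ?_
    · obtain ⟨k, hk⟩ := Function.ne_iff.1 hc
      obtain ⟨V, hV⟩ := ρ.exists_pos (mem_univ x)
      exact Function.ne_iff.2 ⟨(k, V), mul_ne_zero hk hV.ne'⟩
    · exact (ncard_support_mul_le c fun V ↦ ρ V x).trans
        ((Nat.mul_le_mul_left _ (hmult x)).trans hD)

lemma HasCovDimLE.dense_forall_notMem (hX : HasCovDimLE X d) (hB : HasCodimGT B d)
    (hcone : ∀ c : ℝ, c ≠ 0 → c • B ⊆ B) : Dense {g : C(X, E) | ∀ x, g x ∉ B} := by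
  have h := (surjective_eval ()).denseRange.dense_image (continuous_apply ())
    (hX.dense_forall_sum_smul_notMem hB hcone (κ := Unit) (by simp))
  refine h.mono ?_
  rintro _ ⟨g, hg, rfl⟩ x
  simpa using hg x 1 one_ne_zero

theorem HasCovDimLE.joinedIn_forall_notMem (hX : HasCovDimLE X d)
    (hB : HasCodimGT B (2 * d + 1)) (hcone : ∀ c : ℝ, c ≠ 0 → c • B ⊆ B) (hclosed : IsClosed B)
    {f g : C(X, E)} (hf : ∀ x, f x ∉ B) (hg : ∀ x, g x ∉ B) :
    JoinedIn {h : C(X, E) | ∀ x, h x ∉ B} f g := by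
  set U := {h : C(X, E) | ∀ x, h x ∉ B}
  have hU : IsOpen U := by
    simpa [MapsTo] using ContinuousMap.isOpen_setOfPred_mapsTo isCompact_univ hclosed.isOpen_compl
  have heval (i : Fin 2) : Continuous fun h : Fin 2 → C(X, E) ↦ h i := continuous_apply i
  have hpair : IsOpen
      {h : Fin 2 → C(X, E) | h 0 ∈ pathComponentIn U f ∧ h 1 ∈ pathComponentIn U g} :=
    ((hU.pathComponentIn f).preimage (heval 0)).inter ((hU.pathComponentIn g).preimage (heval 1))
  obtain ⟨h, ⟨hfh, hgh⟩, hdense⟩ := (hX.dense_forall_sum_smul_notMem hB hcone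
    (by rw [Fintype.card_fin]; omega)).inter_open_nonempty _ hpair
    ⟨![f, g], mem_pathComponentIn_self hf, mem_pathComponentIn_self hg⟩
  have hsegment : JoinedIn U (h 0) (h 1) := by
    refine JoinedIn.of_segment_subset ?_
    rintro _ ⟨a, b, -, -, hab, rfl⟩ x
    have hne : ![a, b] ≠ 0 := fun h0 ↦ by
      have ha : a = 0 := congrFun h0 0
      have hb : b = 0 := congrFun h0 1
      linarith
    simpa using hdense x ![a, b] hne
  exact hfh.trans (hsegment.trans hgh.symm)

end CoveringDimension

section MatrixRank

variable {K m n : Type*} [Field K] [Fintype n]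

lemma le_rank_iff_exists_mul_mul_eq_one [Fintype m] {l : ℕ} {A : Matrix m n K} :
    l ≤ A.rank ↔ ∃ (Q : Matrix (Fin l) m K) (E : Matrix n (Fin l) K), Q * A * E = 1 := by
  classical
  constructor
  · intro h
    obtain ⟨f, hf⟩ := exists_linearIndependent_of_le_finrank (M := A.mulVecLin.range) h
    choose e he using fun i ↦ (f i).2
    let E : Matrix n (Fin l) K := (Matrix.of e)ᵀ
    have hAE : (A * E).col = fun i ↦ (f i : m → K) := funext he
    have hker : (A * E).mulVecLin.ker = ⊥ :=
      LinearMap.ker_eq_bot.2 <| Matrix.mulVec_injective_iff.2 <| by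
        rw [hAE]; exact hf.map' _ (Submodule.ker_subtype _)
    obtain ⟨g, hg⟩ := LinearMap.exists_leftInverse_of_injective _ hker
    refine ⟨LinearMap.toMatrix' g, E, ?_⟩
    have := congrArg LinearMap.toMatrix' hg
    rwa [LinearMap.toMatrix'_comp, LinearMap.toMatrix'_id, ← Matrix.toLin'_apply',
      LinearMap.toMatrix'_toLin', ← Matrix.mul_assoc] at this
  · rintro ⟨Q, E, h⟩
    calc l = (Q * A * E).rank := by rw [h, Matrix.rank_one, Fintype.card_fin]
      _ ≤ (Q * A).rank := Matrix.rank_mul_le_left _ _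
      _ ≤ A.rank := Matrix.rank_mul_le_right _ _

lemma exists_finset_span_row_eq [Finite m] (A : Matrix m n K) :
    ∃ T : Finset m, T.card = A.rank ∧
      Submodule.span K (A.row '' T) = Submodule.span K (range A.row) := by
  classical
  obtain ⟨κ, a, ha, hspan, hindep⟩ := exists_linearIndependent' K A.row
  have := Finite.of_injective a ha
  have := Fintype.ofFinite κ
  refine ⟨Finset.univ.map ⟨a, ha⟩, ?_, ?_⟩
  · rw [Finset.card_map, Finset.card_univ, Matrix.rank_eq_finrank_span_row, ← hspan,
      finrank_span_eq_card hindep]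
  · rw [← hspan, range_comp]
    simp

lemma exists_submatrix_eq_fromRows_mul [Fintype m] {A : Matrix m n K} {r s : ℕ}
    (hA : A.rank ≤ r) (hm : Fintype.card m = r + s) :
    ∃ (e : Fin r ⊕ Fin s ≃ m) (R : Matrix (Fin r) n K) (C : Matrix (Fin s) (Fin r) K),
      A.submatrix e id = Matrix.fromRows R (C * R) := by
  classical
  obtain ⟨T₀, hT₀, hspan⟩ := exists_finset_span_row_eq A
  obtain ⟨T, hsub, hT⟩ := Finset.exists_superset_card_eq (hT₀.trans_le hA) (by omega)
  have hTc : Fintype.card {i // i ∉ T} = s := by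
    rw [Fintype.card_subtype_compl, Fintype.card_coe]; omega
  let eT : Fin r ≃ T := (T.equivFinOfCardEq hT).symm
  let e : Fin r ⊕ Fin s ≃ m :=
    (eT.sumCongr (Fintype.equivFinOfCardEq hTc).symm).trans (Equiv.sumCompl (· ∈ T))
  have himage : A.row '' T = range fun i ↦ A.row (eT i) := by
    rw [image_eq_range]
    exact (eT.surjective.range_comp fun i : T ↦ A.row i).symm
  have hmem (j : m) : A.row j ∈ Submodule.span K (range fun i ↦ A.row (eT i)) := by
    rw [← himage]
    refine Submodule.span_mono (image_mono hsub) ?_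
    rw [hspan]
    exact Submodule.subset_span (mem_range_self j)
  choose c hc using fun j ↦ (Submodule.mem_span_range_iff_exists_fun K).1 (hmem j)
  refine ⟨e, Matrix.of fun i ↦ A.row (eT i), Matrix.of fun j ↦ c (e (Sum.inr j)), ?_⟩
  ext (i | i) j
  · rfl
  · simpa [Matrix.mul_apply] using (congrFun (hc (e (Sum.inr i))) j).symm

end MatrixRank

section MatrixRankTopology

open scoped Matrix.Norms.Elementwise

variable {𝕜 m n : Type*} [RCLike 𝕜] [Fintype n]

lemma isOpen_setOfPred_le_rank [Finite m] (l : ℕ) : IsOpen {A : Matrix m n 𝕜 | l ≤ A.rank} := by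
  have := Fintype.ofFinite m
  refine isOpen_iff_mem_nhds.2 fun A hA ↦ ?_
  obtain ⟨Q, E, hQE⟩ := le_rank_iff_exists_mul_mul_eq_one.1 hA
  have hcont : Continuous fun B : Matrix m n 𝕜 ↦ (Q * B * E).det := by fun_prop
  filter_upwards [hcont.continuousAt.eventually_ne (y := 0) (by simp [hQE])] with B hB
  refine le_rank_iff_exists_mul_mul_eq_one.2 ⟨(Q * B * E)⁻¹ * Q, E, ?_⟩
  rw [Matrix.mul_assoc, Matrix.mul_assoc, ← Matrix.mul_assoc Q,
    Matrix.nonsing_inv_mul _ (isUnit_iff_ne_zero.2 hB)]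

lemma rank_real_smul {c : ℝ} (hc : c ≠ 0) (A : Matrix m n 𝕜) : (c • A).rank = A.rank := by
  rw [← algebraMap_smul 𝕜 c A]
  refine Matrix.rank_smul_of_mem_nonZeroDivisors A (mem_nonZeroDivisors_of_ne_zero ?_)
  simpa using hc

lemma smul_setOfPred_rank_lt_subset (l : ℕ) (c : ℝ) (hc : c ≠ 0) :
    c • {A : Matrix m n 𝕜 | A.rank < l} ⊆ {A | A.rank < l} := by
  rintro _ ⟨A, hA, rfl⟩
  exact (rank_real_smul hc A).trans_lt hA

variable [Fintype m]

lemma contDiff_fromRows_mul_submatrix {r s : ℕ} (e : m ≃ Fin r ⊕ Fin s) :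
    ContDiff ℝ 1 fun p : Matrix (Fin r) n 𝕜 × Matrix (Fin s) (Fin r) 𝕜 ↦
      (Matrix.fromRows p.1 (p.2 * p.1)).submatrix e id := by
  refine contDiff_pi.2 fun i ↦ contDiff_pi.2 fun j ↦ ?_
  have hentry₁ (i : Fin r) (j : n) :
      ContDiff ℝ 1 fun p : Matrix (Fin r) n 𝕜 × Matrix (Fin s) (Fin r) 𝕜 ↦ p.1 i j :=
    contDiff_pi.1 (contDiff_pi.1 contDiff_fst i) j
  have hentry₂ (i : Fin s) (j : Fin r) :
      ContDiff ℝ 1 fun p : Matrix (Fin r) n 𝕜 × Matrix (Fin s) (Fin r) 𝕜 ↦ p.2 i j :=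
    contDiff_pi.1 (contDiff_pi.1 contDiff_snd i) j
  rcases hi : e i with i' | i'
  · simpa [hi] using hentry₁ i' j
  · simpa [hi, Matrix.mul_apply] using
      ContDiff.sum fun q _ ↦ (hentry₂ i' q).mul (hentry₁ q j)

lemma hasCodimGT_setOfPred_rank_lt {l D : ℕ} (h : D <
    finrank ℝ 𝕜 * ((Fintype.card m + 1 - l) * (Fintype.card n + 1 - l))) :
    HasCodimGT {A : Matrix m n 𝕜 | A.rank < l} D := by
  rcases l with - | r
  · intro S _
    simp [IsMeagre.empty]
  rw [Nat.add_sub_add_right, Nat.add_sub_add_right] at h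
  have hpos : 0 < (Fintype.card m - r) * (Fintype.card n - r) :=
    Nat.pos_of_mul_pos_left (D.zero_le.trans_lt h)
  obtain ⟨s, hs⟩ : ∃ s, Fintype.card m = r + s := ⟨Fintype.card m - r, by grind⟩
  obtain ⟨t, ht⟩ : ∃ t, Fintype.card n = r + t := ⟨Fintype.card n - r, by grind⟩
  have hfin : FiniteDimensional ℝ (Matrix (Fin r) n 𝕜 × Matrix (Fin s) (Fin r) 𝕜) :=
    Module.Finite.prod
  refine HasCodimGT.of_subset_iUnion_range
    (fun e : Fin r ⊕ Fin s ≃ m ↦ contDiff_fromRows_mul_submatrix e.symm) (fun A hA ↦ ?_) ?_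
  · obtain ⟨e, R, C, hRC⟩ := exists_submatrix_eq_fromRows_mul (Nat.lt_succ_iff.1 hA) hs
    refine mem_iUnion.2 ⟨e, (R, C), ?_⟩
    simp [← hRC]
  · rw [finrank_prod]
    simp only [finrank_matrix, Fintype.card_fin, hs, ht, Nat.add_sub_cancel_left] at h ⊢
    linarith

variable {X : Type*} [TopologicalSpace X] [CompactSpace X] [T2Space X] {d l : ℕ}

lemma HasCovDimLE.dense_forall_le_rank (hX : HasCovDimLE X d)
    (h : d < finrank ℝ 𝕜 * ((Fintype.card m + 1 - l) * (Fintype.card n + 1 - l))) :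
    Dense {g : C(X, Matrix m n 𝕜) | ∀ x, l ≤ (g x).rank} := by
  have hdense := hX.dense_forall_notMem (hasCodimGT_setOfPred_rank_lt h)
    (smul_setOfPred_rank_lt_subset l)
  simp only [mem_ofPred_eq, not_lt] at hdense
  exact hdense

lemma HasCovDimLE.joinedIn_forall_le_rank (hX : HasCovDimLE X d)
    (h : 2 * d + 1 < finrank ℝ 𝕜 * ((Fintype.card m + 1 - l) * (Fintype.card n + 1 - l)))
    {s t : C(X, Matrix m n 𝕜)} (hs : ∀ x, l ≤ (s x).rank) (ht : ∀ x, l ≤ (t x).rank) :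
    JoinedIn {g : C(X, Matrix m n 𝕜) | ∀ x, l ≤ (g x).rank} s t := by
  have hclosed : IsClosed {A : Matrix m n 𝕜 | A.rank < l} := by
    simpa [← isOpen_compl_iff, compl_ofPred] using isOpen_setOfPred_le_rank l
  exact (hX.joinedIn_forall_notMem (hasCodimGT_setOfPred_rank_lt h)
    (smul_setOfPred_rank_lt_subset l) hclosed (fun x ↦ (hs x).not_gt)
    fun x ↦ (ht x).not_gt).mono fun _ hg x ↦ not_lt.1 (hg x)

end MatrixRankTopology

section Selection

lemma dense_biInter_finset_of_isOpen {Y ι : Type*} [TopologicalSpace Y] {f : ι → Set Y}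
    (s : Finset ι) (ho : ∀ i, IsOpen (f i)) (hd : ∀ i, Dense (f i)) : Dense (⋂ i ∈ s, f i) := by
  classical
  induction s using Finset.induction_on with
  | empty => simp
  | insert i s _ ih =>
    rw [Finset.set_biInter_insert]
    exact (hd i).inter_of_isOpen_left ih (ho i)

variable {𝕜 m n p : Type*} [RCLike 𝕜] [Fintype m] [Fintype n]
  {X : Type*} [TopologicalSpace X] [CompactSpace X] {d l : ℕ}

lemma isOpen_setOfPred_forall_le_rank_mul [Finite p] (a : C(X, Matrix m n 𝕜)) {K : Set X}
    (hK : IsCompact K) :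
    IsOpen {w : C(X, Matrix p m 𝕜) | ∀ x ∈ K, l ≤ (w x * a x).rank} := by
  have hcont : Continuous fun y : C(X, Matrix p m 𝕜) × X ↦ y.1 y.2 * a y.2 := by fun_prop
  refine isOpen_iff_eventually.2 fun w hw ↦ hK.eventually_forall_of_forall_eventually fun x hx ↦ ?_
  exact ((isOpen_setOfPred_le_rank l).preimage hcont).mem_nhds (hw x hx)

variable [T2Space X]

lemma exists_local_mul_mul_eq_one (a : C(X, Matrix m n 𝕜)) {x : X} (hx : l ≤ (a x).rank) :
    ∃ K ∈ 𝓝 x, IsCompact K ∧ ∃ (Q : C(X, Matrix (Fin l) m 𝕜)) (E : Matrix n (Fin l) 𝕜),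
      ∀ y ∈ K, Q y * a y * E = 1 := by
  obtain ⟨Q, E, hQE⟩ := le_rank_iff_exists_mul_mul_eq_one.1 hx
  let M (y : X) : Matrix (Fin l) (Fin l) 𝕜 := Q * a y * E
  have hdet : Continuous fun y ↦ (M y).det := by fun_prop
  have hdetx : (M x).det ≠ 0 := by simp [M, hQE]
  obtain ⟨K, hK, hKclosed, hKdet⟩ := exists_mem_nhds_isClosed_subset
    (hdet.continuousAt.eventually_ne hdetx)
  have hinv : Continuous fun y : K ↦ (M y)⁻¹ := by
    simp only [Matrix.inv_def, Ring.inverse_eq_inv']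
    exact ((hdet.comp continuous_subtype_val).inv₀ fun y ↦ hKdet y.2).smul (by fun_prop)
  have := TietzeExtension.of_tvs 𝕜 (E := Matrix (Fin l) (Fin l) 𝕜)
  obtain ⟨g, hg⟩ := ContinuousMap.exists_restrict_eq hKclosed ⟨_, hinv⟩
  refine ⟨K, hK, hKclosed.isCompact, ⟨fun y ↦ g y * Q, by fun_prop⟩, E, fun y hy ↦ ?_⟩
  have hgy : g y = (M y)⁻¹ := congrArg (· ⟨y, hy⟩) hg
  simpa [hgy, Matrix.mul_assoc, M] using
    Matrix.nonsing_inv_mul (M y) (isUnit_iff_ne_zero.2 (hKdet hy))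

variable [Fintype p]

lemma HasCovDimLE.dense_forall_le_rank_mul (hX : HasCovDimLE X d)
    (h : d < finrank ℝ 𝕜 * (Fintype.card p + 1 - l)) {a : C(X, Matrix m n 𝕜)} {K : Set X}
    {Q : C(X, Matrix (Fin l) m 𝕜)} {E : Matrix n (Fin l) 𝕜} (hQ : ∀ x ∈ K, Q x * a x * E = 1) :
    Dense {w : C(X, Matrix p m 𝕜) | ∀ x ∈ K, l ≤ (w x * a x).rank} := by
  intro w
  let Φ (g : C(X, Matrix p (Fin l) 𝕜)) : C(X, Matrix p m 𝕜) :=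
    ⟨fun x ↦ w x + (g x - w x * a x * E) * Q x, by fun_prop⟩
  have hΦ : Continuous Φ := ContinuousMap.continuous_of_continuous_uncurry _ (by
    simp only [Φ, Function.uncurry_def, ContinuousMap.coe_mk]; fun_prop)
  have hΦE (g) {x} (hx : x ∈ K) : Φ g x * a x * E = g x := by
    calc Φ g x * a x * E = w x * a x * E + (g x - w x * a x * E) * (Q x * a x * E) := by
          simp only [Φ, ContinuousMap.coe_mk, Matrix.add_mul, Matrix.mul_assoc]
      _ = g x := by rw [hQ x hx, Matrix.mul_one, add_sub_cancel]
  have hdense : Dense {g : C(X, Matrix p (Fin l) 𝕜) | ∀ x, l ≤ (g x).rank} :=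
    hX.dense_forall_le_rank (by simpa using h)
  let g₀ : C(X, Matrix p (Fin l) 𝕜) := ⟨fun x ↦ w x * a x * E, by fun_prop⟩
  have hg₀ : Φ g₀ = w := by ext1 x; simp [Φ, g₀]
  rw [← hg₀]
  refine map_mem_closure hΦ (hdense g₀) fun g hg x hx ↦ (hg x).trans ?_
  rw [← hΦE g hx]
  exact Matrix.rank_mul_le_left _ _

theorem HasCovDimLE.exists_forall_le_rank_mul (hX : HasCovDimLE X d)
    (h : d < finrank ℝ 𝕜 * (Fintype.card p + 1 - l)) {a : C(X, Matrix m n 𝕜)}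
    (ha : ∀ x, l ≤ (a x).rank) : ∃ w : C(X, Matrix p m 𝕜), ∀ x, l ≤ (w x * a x).rank := by
  choose K hK hKcompact Q E hQE using fun x ↦ exists_local_mul_mul_eq_one a (ha x)
  obtain ⟨T, hT⟩ := CompactSpace.elim_nhds_subcover K hK
  obtain ⟨w, hw⟩ := (dense_biInter_finset_of_isOpen T
    (fun x ↦ isOpen_setOfPred_forall_le_rank_mul (p := p) (l := l) a (hKcompact x))
    fun x ↦ hX.dense_forall_le_rank_mul h (hQE x)).nonempty
  refine ⟨w, fun y ↦ ?_⟩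
  obtain ⟨x, hx, hy⟩ := mem_iUnion₂.1 (hT.ge (mem_univ y))
  exact mem_iInter₂.1 hw x hx y hy

end Selection

section PosSemidef

variable {𝕜 m n : Type*} [RCLike 𝕜] [Fintype m] [Fintype n]

lemma rank_le_rank_add_of_posSemidef {P Q : Matrix n n 𝕜} (hP : P.PosSemidef) (hQ : Q.PosSemidef) :
    P.rank ≤ (P + Q).rank := by
  have hker : (P + Q).mulVecLin.ker ≤ P.mulVecLin.ker := by
    intro v (hv : (P + Q) *ᵥ v = 0)
    have hsum : star v ⬝ᵥ P *ᵥ v + star v ⬝ᵥ Q *ᵥ v = 0 := by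
      rw [← dotProduct_add, ← Matrix.add_mulVec, hv, dotProduct_zero]
    exact (hP.dotProduct_mulVec_zero_iff v).1 ((add_eq_zero_iff_of_nonneg
      (hP.dotProduct_mulVec_nonneg v) (hQ.dotProduct_mulVec_nonneg v)).1 hsum).1
  have hP := P.mulVecLin.finrank_range_add_finrank_ker
  have hPQ := (P + Q).mulVecLin.finrank_range_add_finrank_ker
  have := Submodule.finrank_mono hker
  rw [Matrix.rank, Matrix.rank]
  omega

lemma le_rank_of_mem_segment {l : ℕ} {P Q R : Matrix n n 𝕜} (hP : P.PosSemidef)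
    (hQ : Q.PosSemidef) (hlP : l ≤ P.rank) (hlQ : l ≤ Q.rank) (hR : R ∈ segment ℝ P Q) :
    l ≤ R.rank := by
  obtain ⟨s, t, hs, ht, hst, rfl⟩ := hR
  rcases hs.eq_or_lt with rfl | hs'
  · have : t = 1 := by linarith
    simpa [this] using hlQ
  · refine (hlP.trans_eq (rank_real_smul hs'.ne' P).symm).trans ?_
    exact rank_le_rank_add_of_posSemidef (hP.smul hs) (hQ.smul ht)

/-- The positive elements of `C(X, M_n(𝕜))` whose pointwise rank lies in `[l, k]`. -/
def posSemidefRankIcc (X n 𝕜 : Type*) [TopologicalSpace X] [Fintype n] [RCLike 𝕜] (l k : ℕ) :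
    Set C(X, Matrix n n 𝕜) :=
  {c | (∀ x, (c x).PosSemidef) ∧ ∀ x, l ≤ (c x).rank ∧ (c x).rank ≤ k}

variable {X : Type*} [TopologicalSpace X] {d l k : ℕ} {a b : C(X, Matrix n n 𝕜)}

lemma joinedIn_posSemidefRankIcc_of_forall_segment (ha : a ∈ posSemidefRankIcc X n 𝕜 l k)
    (hb : b ∈ posSemidefRankIcc X n 𝕜 l k)
    (h : ∀ x, ∀ R ∈ segment ℝ (a x) (b x), R.rank ≤ k) :
    JoinedIn (posSemidefRankIcc X n 𝕜 l k) a b := by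
  refine JoinedIn.of_segment_subset ?_
  rintro _ ⟨s, t, hs, ht, hst, rfl⟩
  have hmem (x : X) : s • a x + t • b x ∈ segment ℝ (a x) (b x) := ⟨s, t, hs, ht, hst, rfl⟩
  exact ⟨fun x ↦ ((ha.1 x).smul hs).add ((hb.1 x).smul ht), fun x ↦
    ⟨le_rank_of_mem_segment (ha.1 x) (hb.1 x) (ha.2 x).1 (hb.2 x).1 (hmem x), h x _ (hmem x)⟩⟩

/-- The continuous field of Gram matrices `x ↦ (s x)ᴴ * s x` attached to a continuous field
of matrices `s`. -/
def gramMatrix (s : C(X, Matrix m n 𝕜)) : C(X, Matrix n n 𝕜) :=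
  ⟨fun x ↦ (s x)ᴴ * s x, by fun_prop⟩

lemma gramMatrix_mem_posSemidefRankIcc {s : C(X, Matrix m n 𝕜)} (hl : ∀ x, l ≤ (s x).rank)
    (hk : ∀ x, (s x).rank ≤ k) : gramMatrix s ∈ posSemidefRankIcc X n 𝕜 l k := by
  refine ⟨fun x ↦ Matrix.posSemidef_conjTranspose_mul_self (s x), fun x ↦ ?_⟩
  rw [gramMatrix, ContinuousMap.coe_mk, Matrix.rank_conjTranspose_mul_self]
  exact ⟨hl x, hk x⟩

lemma joinedIn_gramMatrix (hk : Fintype.card m ≤ k) {s t : C(X, Matrix m n 𝕜)}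
    (h : JoinedIn {g : C(X, Matrix m n 𝕜) | ∀ x, l ≤ (g x).rank} s t) :
    JoinedIn (posSemidefRankIcc X n 𝕜 l k) (gramMatrix s) (gramMatrix t) := by
  have hcont : Continuous (gramMatrix : C(X, Matrix m n 𝕜) → C(X, Matrix n n 𝕜)) :=
    ContinuousMap.continuous_postcomp ⟨fun A : Matrix m n 𝕜 ↦ Aᴴ * A, by fun_prop⟩
  refine (h.map hcont).mono ?_
  rintro _ ⟨g, hg, rfl⟩
  exact gramMatrix_mem_posSemidefRankIcc hg fun x ↦ (Matrix.rank_le_card_height _).trans hk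

lemma joinedIn_gramMatrix_mul (ha : a ∈ posSemidefRankIcc X n 𝕜 l k) {w s : C(X, Matrix m n 𝕜)}
    (hs : ∀ x, s x = w x * a x) (hl : ∀ x, l ≤ (s x).rank) :
    JoinedIn (posSemidefRankIcc X n 𝕜 l k) a (gramMatrix s) := by
  classical
  refine joinedIn_posSemidefRankIcc_of_forall_segment ha
    (gramMatrix_mem_posSemidefRankIcc hl fun x ↦ ?_) ?_
  · rw [hs]
    exact (Matrix.rank_mul_le_right _ _).trans (ha.2 x).2
  · rintro x _ ⟨p, q, -, -, -, rfl⟩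
    have hfactor : p • a x + q • gramMatrix s x =
        (p • (1 : Matrix n n 𝕜) + q • ((s x)ᴴ * w x)) * a x := by
      simp [gramMatrix, hs, Matrix.add_mul, Matrix.mul_assoc]
    rw [hfactor]
    exact (Matrix.rank_mul_le_right _ _).trans (ha.2 x).2

variable [CompactSpace X] [T2Space X]

lemma exists_joinedIn_gramMatrix (hX : HasCovDimLE X d)
    (h : d < finrank ℝ 𝕜 * (Fintype.card m + 1 - l)) (ha : a ∈ posSemidefRankIcc X n 𝕜 l k) :
    ∃ s : C(X, Matrix m n 𝕜), (∀ x, l ≤ (s x).rank) ∧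
      JoinedIn (posSemidefRankIcc X n 𝕜 l k) a (gramMatrix s) := by
  obtain ⟨w, hw⟩ := hX.exists_forall_le_rank_mul (p := m) h fun x ↦ (ha.2 x).1
  exact ⟨⟨fun x ↦ w x * a x, by fun_prop⟩, hw, joinedIn_gramMatrix_mul ha (fun _ ↦ rfl) hw⟩

/-- For `β = finrank ℝ 𝕜` the numerical condition reads `d < β (k + 1 - l)`, without truncation; the
right-hand side is the real codimension of the `k × l` matrices of rank less than `l`. -/
theorem stmt4_general (hX : HasCovDimLE X d)
    (hkl : d + finrank ℝ 𝕜 * l < finrank ℝ 𝕜 * (k + 1))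
    (ha : a ∈ posSemidefRankIcc X n 𝕜 l k) (hb : b ∈ posSemidefRankIcc X n 𝕜 l k) :
    JoinedIn (posSemidefRankIcc X n 𝕜 l k) a b := by
  have hd : d < finrank ℝ 𝕜 * (Fintype.card (Fin k) + 1 - l) := by
    rw [Fintype.card_fin, Nat.mul_sub]
    omega
  rcases lt_or_ge l (Fintype.card n) with hl | hl
  · obtain ⟨s, hs, has⟩ := exists_joinedIn_gramMatrix (m := Fin k) hX hd ha
    obtain ⟨t, ht, hbt⟩ := exists_joinedIn_gramMatrix (m := Fin k) hX hd hb
    have hcodim : 2 * d + 1 < finrank ℝ 𝕜 *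
        ((Fintype.card (Fin k) + 1 - l) * (Fintype.card n + 1 - l)) := by
      have : (d + 1) * 2 ≤ _ := Nat.mul_le_mul hd (show 2 ≤ Fintype.card n + 1 - l by omega)
      rw [← mul_assoc]
      omega
    have hst := hX.joinedIn_forall_le_rank hcodim hs ht
    exact has.trans ((joinedIn_gramMatrix (by simp) hst).trans hbt.symm)
  · have hlk : l ≤ k := Nat.lt_succ_iff.1 <|
      lt_of_mul_lt_mul_left ((Nat.le_add_left _ _).trans_lt hkl) (Nat.zero_le _)
    exact joinedIn_posSemidefRankIcc_of_forall_segment ha hb fun x R _ ↦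
      (Matrix.rank_le_card_width R).trans (hl.trans hlk)

end PosSemidef

/-- On a compact metric space `X` of finite covering dimension `d`, with
`k ≤ n` and `4d ≤ k - l`, the set of positive elements of `M_n(C(X))` whose pointwise rank
lies in `[l, k]` is path connected: any two of its points are joined by a path inside it. -/
theorem stmt4 {X : Type*} [MetricSpace X] [CompactSpace X] (d : ℕ) (hdim : IsCovDim X d)
    (n l k : ℕ) (hn : 0 < n) (hkn : k ≤ n) (hlk : l + 4 * d ≤ k) :
    ∀ a ∈ {c : C(X, Matrix (Fin n) (Fin n) ℂ) |
        (∀ x, (c x).PosSemidef) ∧ ∀ x, l ≤ (c x).rank ∧ (c x).rank ≤ k},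
      ∀ b ∈ {c : C(X, Matrix (Fin n) (Fin n) ℂ) |
        (∀ x, (c x).PosSemidef) ∧ ∀ x, l ≤ (c x).rank ∧ (c x).rank ≤ k},
        JoinedIn {c : C(X, Matrix (Fin n) (Fin n) ℂ) |
          (∀ x, (c x).PosSemidef) ∧ ∀ x, l ≤ (c x).rank ∧ (c x).rank ≤ k} a b :=
  fun _ ha _ hb ↦ stmt4_general hdim.1 (by rw [Complex.finrank_real_complex]; omega) ha hb
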